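/- The classification error function E is homogeneous of degree 0 and its restriction to the unit sphere S^{p−1} = {α ∈ ℝ^p : ‖α‖ = 1} is uniformly continuous; moreover E(α) = E(−α) for every unit vector α, so E induces a well-defined continuous function on the real projective space of lines through the origin in ℝ^p. -/

import Mathlib

open MeasureTheory ProbabilityTheory Matrix Filter Set

noncomputable def Phi (t : ℝ) : ℝ := ((gaussianReal 0 1) (Set.Iic t)).toReal
noncomputable def calE (r g : ℝ) : ℝ :=
  if g = 1 then Phi (-(|r| / 2))
  else
    1/2
      + (1/2) * Phi ((r - g * Real.sqrt (r^2 + (g^2 - 1) * Real.log (g^2))) / (g^2 - 1))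
      - (1/2) * Phi ((r + g * Real.sqrt (r^2 + (g^2 - 1) * Real.log (g^2))) / (g^2 - 1))
      + (1/2) * Phi ((r * g + Real.sqrt (r^2 + (g^2 - 1) * Real.log (g^2))) / (g^2 - 1))
      - (1/2) * Phi ((r * g - Real.sqrt (r^2 + (g^2 - 1) * Real.log (g^2))) / (g^2 - 1))
noncomputable def Evec {p : ℕ} (μ0 μ1 : Fin p → ℝ) (S0 S1 : Matrix (Fin p) (Fin p) ℝ)
    (α : Fin p → ℝ) : ℝ :=
  calE ((dotProduct α μ0 - dotProduct α μ1) / Real.sqrt (dotProduct α (S1.mulVec α)))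
    (Real.sqrt (dotProduct α (S0.mulVec α)) / Real.sqrt (dotProduct α (S1.mulVec α)))

instance {K V : Type*} [DivisionRing K] [AddCommGroup V] [Module K V] [TopologicalSpace V] :
    TopologicalSpace (Projectivization K V) :=
  inferInstanceAs (TopologicalSpace (Quotient (projectivizationSetoid K V)))

lemma Phi_sub_le {x y : ℝ} (h : x ≤ y) : Phi y - Phi x ≤ y - x := by
  have h1 : (gaussianReal 0 1) (Set.Ioc x y) ≤ ENNReal.ofReal (y - x) := by
    rw [gaussianReal_apply 0 (one_ne_zero)]
    calc ∫⁻ z in Set.Ioc x y, gaussianPDF 0 1 z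
        ≤ ∫⁻ z in Set.Ioc x y, 1 := by
          apply lintegral_mono
          intro z
          simp only [gaussianPDF]
          rw [← ENNReal.ofReal_one]
          apply ENNReal.ofReal_le_ofReal
          rw [gaussianPDFReal]
          have h2 : (√(2 * Real.pi * ((1 : NNReal) : ℝ)))⁻¹ ≤ 1 := by
            apply inv_le_one_of_one_le₀
            rw [Real.one_le_sqrt]
            have := Real.pi_gt_three
            simp; linarith
          have h3 : Real.exp (-(z - 0) ^ 2 / (2 * ((1 : NNReal) : ℝ))) ≤ 1 := by
            rw [Real.exp_le_one_iff]
            simp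
            have := sq_nonneg z
            linarith
          have := Real.exp_pos (-(z - 0) ^ 2 / (2 * ((1 : NNReal) : ℝ)))
          calc _ ≤ (1 : ℝ) * 1 := by gcongr
            _ = 1 := by norm_num
      _ = ENNReal.ofReal (y - x) := by simp
  have h2 : Phi y - Phi x = (gaussianReal 0 1).real (Set.Ioc x y) := by
    have : Set.Ioc x y = Set.Iic y \ Set.Iic x := by ext; simp [and_comm]
    rw [this, measureReal_sdiff (Set.Iic_subset_Iic.2 h) measurableSet_Iic]
    rfl
  rw [h2]
  exact ENNReal.toReal_le_of_le_ofReal (by linarith) h1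

lemma Phi_mono : Monotone Phi := fun x y h =>
  ENNReal.toReal_mono (measure_ne_top _ _) (measure_mono (Set.Iic_subset_Iic.2 h))

lemma Phi_abs_sub_le (x y : ℝ) : |Phi x - Phi y| ≤ |x - y| := by
  rcases le_total x y with h | h
  · rw [abs_sub_comm, abs_sub_comm x, abs_of_nonneg (sub_nonneg.2 (Phi_mono h)),
      abs_of_nonneg (sub_nonneg.2 h)]
    exact Phi_sub_le h
  · rw [abs_of_nonneg (sub_nonneg.2 (Phi_mono h)), abs_of_nonneg (sub_nonneg.2 h)]
    exact Phi_sub_le h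

lemma Phi_continuous : Continuous Phi := by
  have : LipschitzWith 1 Phi := by
    apply LipschitzWith.of_dist_le_mul
    intro x y
    simpa [Real.dist_eq] using Phi_abs_sub_le x y
  exact this.continuous

lemma Phi_neg (x : ℝ) : Phi (-x) = 1 - Phi x := by
  have h : (gaussianReal 0 1).map (fun z : ℝ => -z) = gaussianReal 0 1 := by
    rw [gaussianReal_map_neg]; simp
  have : NullSingletonClass (gaussianReal 0 1) := nullSingletonClass_gaussianReal one_ne_zero
  change (gaussianReal 0 1).real (Set.Iic (-x)) = 1 - (gaussianReal 0 1).real (Set.Iic x)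
  rw [← probReal_compl_eq_one_sub measurableSet_Iic]
  conv_lhs => rw [← h]
  rw [map_measureReal_apply measurable_neg measurableSet_Iic]
  have : (fun z : ℝ => -z) ⁻¹' Set.Iic (-x) = Set.Ici x := by ext; simp
  rw [this, Set.compl_Iic]
  exact measureReal_congr Ioi_ae_eq_Ici.symm

lemma calE_neg (r g : ℝ) : calE (-r) g = calE r g := by
  unfold calE
  split_ifs with h
  · simp
  · have e1 : ∀ s : ℝ, (-r - g * s) / (g^2 - 1) = -((r + g * s) / (g^2 - 1)) := by intro s; ring
    have e2 : ∀ s : ℝ, (-r + g * s) / (g^2 - 1) = -((r - g * s) / (g^2 - 1)) := by intro s; ring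
    have e3 : ∀ s : ℝ, (-r * g + s) / (g^2 - 1) = -((r * g - s) / (g^2 - 1)) := by intro s; ring
    have e4 : ∀ s : ℝ, (-r * g - s) / (g^2 - 1) = -((r * g + s) / (g^2 - 1)) := by intro s; ring
    rw [neg_sq, e1, e2, e3, e4]
    simp only [Phi_neg]
    ring

lemma calE_abs (r g : ℝ) : calE |r| g = calE r g := by
  rcases abs_choice r with h | h <;> rw [h]
  exact calE_neg r g

noncomputable def sD (r g : ℝ) : ℝ := Real.sqrt (r^2 + (g^2 - 1) * Real.log (g^2))

lemma D_nonneg (g : ℝ) (hg : 0 < g) : 0 ≤ (g^2 - 1) * Real.log (g^2) := by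
  rcases le_total 1 (g^2) with h | h
  · exact mul_nonneg (by linarith) (Real.log_nonneg h)
  · exact mul_nonneg_of_nonpos_of_nonpos (by linarith) (Real.log_nonpos (by positivity) h)

lemma sD_sq (r g : ℝ) (hg : 0 < g) : sD r g ^ 2 = r^2 + (g^2 - 1) * Real.log (g^2) := by
  apply Real.sq_sqrt
  have := D_nonneg g hg
  positivity

lemma sD_cont (r g : ℝ) (hg : 0 < g) :
    ContinuousAt (fun x : ℝ × ℝ => sD x.1 x.2) (r, g) := by
  unfold sD
  have : ContinuousAt (fun x : ℝ × ℝ => Real.log (x.2^2)) (r, g) :=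
    ContinuousAt.log (by fun_prop) (by positivity)
  fun_prop

/-- The formula for g ≠ 1. -/
noncomputable def calF (r g : ℝ) : ℝ :=
    1/2
      + (1/2) * Phi ((r - g * sD r g) / (g^2 - 1))
      - (1/2) * Phi ((r + g * sD r g) / (g^2 - 1))
      + (1/2) * Phi ((r * g + sD r g) / (g^2 - 1))
      - (1/2) * Phi ((r * g - sD r g) / (g^2 - 1))

lemma calE_eq (r g : ℝ) : calE r g = if g = 1 then Phi (-(|r| / 2)) else calF r g := rfl

lemma calF_cont (r g : ℝ) (hg : 0 < g) (h1 : g ≠ 1) :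
    ContinuousAt (fun x : ℝ × ℝ => calF x.1 x.2) (r, g) := by
  have hd : g^2 - 1 ≠ 0 := by
    intro h
    apply h1
    nlinarith
  have hs := sD_cont r g hg
  have hP : ∀ f : ℝ × ℝ → ℝ, ContinuousAt f (r, g) →
      ContinuousAt (fun x => Phi (f x / (x.2^2 - 1))) (r, g) := by
    intro f hf
    exact Phi_continuous.continuousAt.comp (hf.div (by fun_prop) hd)
  have a1 := hP (fun x => x.1 - x.2 * sD x.1 x.2) (by fun_prop)
  have a2 := hP (fun x => x.1 + x.2 * sD x.1 x.2) (by fun_prop)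
  have a3 := hP (fun x => x.1 * x.2 + sD x.1 x.2) (by fun_prop)
  have a4 := hP (fun x => x.1 * x.2 - sD x.1 x.2) (by fun_prop)
  unfold calF
  fun_prop

lemma Phi_diff_tendsto {X : Type*} {l : Filter X} {u v w : X → ℝ}
    (h : ∀ᶠ x in l, u x - v x = w x) (hw : Tendsto w l (nhds 0)) :
    Tendsto (fun x => Phi (u x) - Phi (v x)) l (nhds 0) := by
  rw [tendsto_zero_iff_abs_tendsto_zero] at hw ⊢
  refine tendsto_of_tendsto_of_tendsto_of_le_of_le' tendsto_const_nhds hw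
    (Eventually.of_forall fun _ => abs_nonneg _) ?_
  filter_upwards [h] with x hx
  simp only [Function.comp]
  rw [← hx]
  exact Phi_abs_sub_le _ _

lemma calF_tendsto (r : ℝ) (hr : 0 ≤ r) :
    Tendsto (fun x : ℝ × ℝ => calF x.1 x.2) (nhds (r, 1) ⊓ 𝓟 {x | ¬ x.2 = 1})
      (nhds (Phi (-(|r| / 2)))) := by
  set l := nhds ((r, 1) : ℝ × ℝ) ⊓ 𝓟 {x | ¬ x.2 = 1} with hl
  have hle : l ≤ nhds (r, 1) := inf_le_left
  have hs0 : sD r 1 = r := by simp [sD, Real.sqrt_sq hr]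
  have hs := sD_cont r 1 one_pos
  have hg : ∀ᶠ x in l, 0 < x.2 := by
    apply hle
    exact (continuous_snd.tendsto ((r, 1) : ℝ × ℝ)).eventually (lt_mem_nhds one_pos)
  have hd : ∀ᶠ x in l, x.2 ≠ 1 := mem_inf_of_right (mem_principal_self _)
  have hbc : Tendsto (fun x : ℝ × ℝ => Phi ((x.1 * x.2 + sD x.1 x.2) / (x.2^2 - 1))
      - Phi ((x.1 + x.2 * sD x.1 x.2) / (x.2^2 - 1))) l (nhds 0) := by
    apply Phi_diff_tendsto (w := fun x => (x.1 - sD x.1 x.2) / (x.2 + 1))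
    · filter_upwards [hg, hd] with x h1 h2
      have e : x.2^2 - 1 = (x.2 - 1) * (x.2 + 1) := by ring
      have : x.2 - 1 ≠ 0 := sub_ne_zero.2 h2
      rw [e]
      field_simp
      ring
    · have : ContinuousAt (fun x : ℝ × ℝ => (x.1 - sD x.1 x.2) / (x.2 + 1)) (r, 1) :=
        ContinuousAt.div (by fun_prop) (by fun_prop) (by norm_num)
      have t := this.tendsto.mono_left hle
      simpa [hs0] using t
  have hae : Tendsto (fun x : ℝ × ℝ => Phi ((x.1 - x.2 * sD x.1 x.2) / (x.2^2 - 1))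
      - Phi ((x.1 * x.2 - sD x.1 x.2) / (x.2^2 - 1))) l (nhds (Phi (-(r/2)) - Phi (r/2))) := by
    rcases hr.eq_or_lt with h0 | h0
    · subst h0
      simp only [zero_div, neg_zero, sub_self]
      apply Phi_diff_tendsto (w := fun x => -(x.1 + sD x.1 x.2) / (x.2 + 1))
      · filter_upwards [hg, hd] with x h1 h2
        have e : x.2^2 - 1 = (x.2 - 1) * (x.2 + 1) := by ring
        have : x.2 - 1 ≠ 0 := sub_ne_zero.2 h2
        rw [e]
        field_simp
        ring
      · have : ContinuousAt (fun x : ℝ × ℝ => -(x.1 + sD x.1 x.2) / (x.2 + 1)) (0, 1) :=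
          ContinuousAt.div (by fun_prop) (by fun_prop) (by norm_num)
        have t := this.tendsto.mono_left hle
        simpa [hs0] using t
    · have hrp : ∀ᶠ x in l, 0 < x.1 := by
        apply hle
        exact (continuous_fst.tendsto ((r, 1) : ℝ × ℝ)).eventually (lt_mem_nhds h0)
      have hlog : ContinuousAt (fun x : ℝ × ℝ => Real.log (x.2^2)) (r, 1) :=
        ContinuousAt.log (by fun_prop) (by norm_num)
      have hsn : ∀ x : ℝ × ℝ, 0 ≤ sD x.1 x.2 := fun x => Real.sqrt_nonneg _
      apply Tendsto.sub
      · apply (Phi_continuous.tendsto _).comp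
        have : ContinuousAt (fun x : ℝ × ℝ =>
            -(x.1^2 + x.2^2 * Real.log (x.2^2)) / (x.1 + x.2 * sD x.1 x.2)) (r, 1) :=
          ContinuousAt.div (by fun_prop) (by fun_prop) (by simp [hs0]; linarith)
        have t := this.tendsto.mono_left hle
        have e : -(r^2 + (1:ℝ)^2 * Real.log ((1:ℝ)^2)) / (r + 1 * sD r 1) = -(r/2) := by
          rw [hs0]; simp; field_simp; ring
        simp only [e] at t
        refine t.congr' ?_
        filter_upwards [hg, hd, hrp] with x h1 h2 h3
        have hsq := sD_sq x.1 x.2 h1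
        have hsx := hsn x
        have hdx : x.2^2 - 1 ≠ 0 := by
          intro h
          apply h2
          nlinarith
        have hne : x.1 + x.2 * sD x.1 x.2 ≠ 0 := by positivity
        rw [div_eq_div_iff hne hdx]
        linear_combination x.2^2 * hsq
      · apply (Phi_continuous.tendsto _).comp
        have : ContinuousAt (fun x : ℝ × ℝ =>
            (x.1^2 - Real.log (x.2^2)) / (x.1 * x.2 + sD x.1 x.2)) (r, 1) :=
          ContinuousAt.div (by fun_prop) (by fun_prop) (by simp [hs0]; linarith)
        have t := this.tendsto.mono_left hle
        have e : (r^2 - Real.log ((1:ℝ)^2)) / (r * 1 + sD r 1) = r/2 := by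
          rw [hs0]; simp; field_simp; ring
        simp only [e] at t
        refine t.congr' ?_
        filter_upwards [hg, hd, hrp] with x h1 h2 h3
        have hsq := sD_sq x.1 x.2 h1
        have hsx := hsn x
        have hdx : x.2^2 - 1 ≠ 0 := by
          intro h
          apply h2
          nlinarith
        have hne : x.1 * x.2 + sD x.1 x.2 ≠ 0 := by positivity
        rw [div_eq_div_iff hne hdx]
        linear_combination hsq
  have key := ((hbc.add hae).const_mul (1/2)).const_add (1/2)
  have ee : 1/2 + 1/2 * (0 + (Phi (-(r/2)) - Phi (r/2))) = Phi (-(|r| / 2)) := by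
    rw [abs_of_nonneg hr, Phi_neg]; ring
  rw [ee] at key
  refine key.congr ?_
  intro x
  unfold calF
  ring

lemma calE_cont_nonneg (r g : ℝ) (hr : 0 ≤ r) (hg : 0 < g) :
    ContinuousAt (fun x : ℝ × ℝ => calE x.1 x.2) (r, g) := by
  by_cases h1 : g = 1
  · subst h1
    unfold ContinuousAt
    simp only [calE_eq, if_true]
    apply Tendsto.if
    · have : Continuous (fun x : ℝ × ℝ => Phi (-(|x.1| / 2))) :=
        Phi_continuous.comp (by fun_prop)
      exact (this.tendsto (r, 1)).mono_left inf_le_left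
    · exact calF_tendsto r hr
  · refine (calF_cont r g hg h1).congr ?_
    have : ∀ᶠ x in nhds ((r, g) : ℝ × ℝ), x.2 ≠ 1 :=
      (continuous_snd.tendsto ((r, g) : ℝ × ℝ)).eventually (isOpen_ne.mem_nhds h1)
    filter_upwards [this] with x hx
    simp [calE_eq, hx]

lemma calE_cont (r g : ℝ) (hg : 0 < g) :
    ContinuousAt (fun x : ℝ × ℝ => calE x.1 x.2) (r, g) := by
  have h := calE_cont_nonneg |r| g (abs_nonneg r) hg
  have h2 : ContinuousAt (fun x : ℝ × ℝ => ((|x.1|, x.2) : ℝ × ℝ)) (r, g) := by fun_prop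
  have := ContinuousAt.comp (f := fun x : ℝ × ℝ => ((|x.1|, x.2) : ℝ × ℝ)) (x := (r, g)) h h2
  simpa [Function.comp_def, calE_abs] using this

lemma quad_pos {p : ℕ} {S : Matrix (Fin p) (Fin p) ℝ} (h : S.PosDef) (v : Fin p → ℝ)
    (hv : v ≠ 0) : 0 < dotProduct v (S.mulVec v) := by
  simpa using h.dotProduct_mulVec_pos hv

lemma Evec_contAt {p : ℕ} (μ0 μ1 : Fin p → ℝ) (S0 S1 : Matrix (Fin p) (Fin p) ℝ)
    (h0 : S0.PosDef) (h1 : S1.PosDef) (v : Fin p → ℝ) (hv : v ≠ 0) :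
    ContinuousAt (Evec μ0 μ1 S0 S1) v := by
  have p0 := Real.sqrt_pos.2 (quad_pos h0 v hv)
  have p1 := Real.sqrt_pos.2 (quad_pos h1 v hv)
  have c0 : Continuous fun α : Fin p → ℝ => Real.sqrt (dotProduct α (S0.mulVec α)) :=
    (continuous_id.dotProduct (continuous_const.matrix_mulVec continuous_id)).sqrt
  have c1 : Continuous fun α : Fin p → ℝ => Real.sqrt (dotProduct α (S1.mulVec α)) :=
    (continuous_id.dotProduct (continuous_const.matrix_mulVec continuous_id)).sqrt
  have d0 : Continuous fun α : Fin p → ℝ => dotProduct α μ0 :=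
    continuous_id.dotProduct continuous_const
  have d1 : Continuous fun α : Fin p → ℝ => dotProduct α μ1 :=
    continuous_id.dotProduct continuous_const
  have cr := (d0.sub d1).continuousAt.div (a := v) c1.continuousAt p1.ne'
  have cg := c0.continuousAt.div (a := v) c1.continuousAt p1.ne'
  exact ContinuousAt.comp (f := fun α : Fin p → ℝ =>
    (((dotProduct α μ0 - dotProduct α μ1) / Real.sqrt (dotProduct α (S1.mulVec α)),
    Real.sqrt (dotProduct α (S0.mulVec α)) / Real.sqrt (dotProduct α (S1.mulVec α))) : ℝ × ℝ))
    (calE_cont _ _ (div_pos p0 p1)) (cr.prodMk cg)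

lemma Evec_smul {p : ℕ} (μ0 μ1 : Fin p → ℝ) (S0 S1 : Matrix (Fin p) (Fin p) ℝ)
    (c : ℝ) (hc : c ≠ 0) (v : Fin p → ℝ) :
    Evec μ0 μ1 S0 S1 (c • v) = Evec μ0 μ1 S0 S1 v := by
  have hq : ∀ S : Matrix (Fin p) (Fin p) ℝ,
      Real.sqrt (dotProduct (c • v) (S.mulVec (c • v))) =
        |c| * Real.sqrt (dotProduct v (S.mulVec v)) := by
    intro S
    rw [mulVec_smul, smul_dotProduct, dotProduct_smul, smul_eq_mul, smul_eq_mul, ← mul_assoc,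
      Real.sqrt_mul (mul_self_nonneg c), Real.sqrt_mul_self_eq_abs]
  have hc' : |c| ≠ 0 := abs_ne_zero.2 hc
  unfold Evec
  rw [hq, hq, mul_div_mul_left _ _ hc', smul_dotProduct, smul_dotProduct, ← smul_sub, smul_eq_mul]
  rcases abs_choice c with h | h
  · rw [h, mul_div_mul_left _ _ hc]
  · rw [h, neg_mul, div_neg, mul_div_mul_left _ _ hc, calE_neg]

/-- E is homogeneous of degree 0, uniformly continuous on the unit sphere,
even (E(α) = E(−α)), and induces a well-defined continuous function on real
projective space. -/
theorem Evec_homogeneous_uniformContinuous_projective {p : ℕ} (hp : 1 ≤ p)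
    (μ0 μ1 : EuclideanSpace ℝ (Fin p)) (S0 S1 : Matrix (Fin p) (Fin p) ℝ)
    (h0 : S0.PosDef) (h1 : S1.PosDef) :
    (∀ c : ℝ, c ≠ 0 → ∀ α : EuclideanSpace ℝ (Fin p), α ≠ 0 →
        Evec μ0 μ1 S0 S1 (c • α) = Evec μ0 μ1 S0 S1 α) ∧
    UniformContinuousOn (fun α : EuclideanSpace ℝ (Fin p) => Evec μ0 μ1 S0 S1 α)
      (Metric.sphere (0 : EuclideanSpace ℝ (Fin p)) 1) ∧
    (∀ α : EuclideanSpace ℝ (Fin p), ‖α‖ = 1 →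
        Evec μ0 μ1 S0 S1 (-α) = Evec μ0 μ1 S0 S1 α) ∧
    ∃ F : Projectivization ℝ (EuclideanSpace ℝ (Fin p)) → ℝ, Continuous F ∧
      ∀ (α : EuclideanSpace ℝ (Fin p)) (hα : α ≠ 0),
        F (Projectivization.mk ℝ α hα) = Evec μ0 μ1 S0 S1 α := by
  have hne : ∀ α : EuclideanSpace ℝ (Fin p), α ≠ 0 → (α : Fin p → ℝ) ≠ 0 := by
    intro α hα h
    apply hα
    ext i
    exact congrFun h i
  have hcont : ∀ α : EuclideanSpace ℝ (Fin p), α ≠ 0 →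
      ContinuousAt (fun α : EuclideanSpace ℝ (Fin p) => Evec μ0 μ1 S0 S1 α) α := by
    intro α hα
    exact ContinuousAt.comp (f := fun α : EuclideanSpace ℝ (Fin p) => (α : Fin p → ℝ))
      (Evec_contAt μ0 μ1 S0 S1 h0 h1 α (hne α hα)) (by fun_prop)
  have hsm : ∀ c : ℝ, c ≠ 0 → ∀ α : EuclideanSpace ℝ (Fin p),
        Evec μ0 μ1 S0 S1 (c • α) = Evec μ0 μ1 S0 S1 α := by
    intro c hc α
    exact Evec_smul μ0 μ1 S0 S1 c hc α
  refine ⟨fun c hc α _ => hsm c hc α, ?_, ?_, ?_⟩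
  · apply (isCompact_sphere _ _).uniformContinuousOn_of_continuous
    intro α hα
    apply (hcont α _).continuousWithinAt
    rintro rfl
    simp at hα
  · intro α _
    have := hsm (-1) (by norm_num) α
    simpa using this
  · have hwd : ∀ a b : {v : EuclideanSpace ℝ (Fin p) // v ≠ 0},
        (projectivizationSetoid ℝ (EuclideanSpace ℝ (Fin p))) a b →
        Evec μ0 μ1 S0 S1 a.1 = Evec μ0 μ1 S0 S1 b.1 := by
      rintro a b ⟨u, hu⟩
      have hu' : (u : ℝ) • b.1 = a.1 := hu
      rw [← hu']
      exact hsm u u.ne_zero b.1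
    refine ⟨Quotient.lift (fun a : {v : EuclideanSpace ℝ (Fin p) // v ≠ 0} =>
      Evec μ0 μ1 S0 S1 a.1) hwd, ?_, fun α hα => rfl⟩
    apply Continuous.quotient_lift
    rw [continuous_iff_continuousAt]
    intro a
    exact ContinuousAt.comp (f := fun a : {v : EuclideanSpace ℝ (Fin p) // v ≠ 0} => a.1)
      (hcont a.1 a.2) continuous_subtype_val.continuousAt
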